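/- Let X and E be real normed spaces, e : ℕ → X and u : ℕ → E sequences, and assume: (i) u is spreading, i.e. for every strictly increasing ψ : ℕ → ℕ and every finitely supported a : ℕ → ℝ, ‖∑_i a_i u_{ψ(i)}‖ = ‖∑_i a_i u_i‖; (ii) no subsequence of e is dominated by u, i.e. for every strictly increasing φ : ℕ → ℕ and every C > 0 there exists a finitely supported a : ℕ → ℝ with ‖∑_i a_i e_{φ(i)}‖ > C ‖∑_i a_i u_i‖. Let (A_m)_{m∈ℕ} be a partition of ℕ into pairwise disjoint nonempty finite sets whose union is ℕ. Then for every D > 0 there exists M ∈ ℕ such that: for every set K ⊆ ℕ satisfying |K ∩ A_m| = 1 for all m < M, there exists a finitely supported a : ℕ → ℝ whose support is contained in K ∩ (A_0 ∪ … ∪ A_{M−1}) such that ‖∑_{k} a_k e_k‖ > D ‖∑_{k} a_k u_k‖. -/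

import Mathlib

/-!
For fixed `D`, the sets `S` on which `u` `D`-dominates `e` form a family of finite character, since
a linear combination involves only finitely many terms. If the conclusion fails, every finite
collection of the `A m` is met by a member of this family, and by compactness (here a limit along an
ultrafilter) one member `T` meets all of them. As the `A m` are disjoint, `T` is infinite, and
enumerating it yields a subsequence of `e` dominated by the corresponding subsequence of `u`, hence
by `u` itself because `u` is spreading.
-/

open Filter Finsupp

section HittingSets

variable {ι α : Type*}

theorem exists_mem_forall_inter_nonempty_of_isOfFiniteCharacter {𝓕 : Set (Set α)}
    (h𝓕 : Order.IsOfFiniteCharacter 𝓕) {A : ι → Set α} (hA : ∀ m, (A m).Finite)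
    (h : ∀ F : Finset ι, ∃ K ∈ 𝓕, ∀ m ∈ F, (A m ∩ K).Nonempty) :
    ∃ T ∈ 𝓕, ∀ m, (A m ∩ T).Nonempty := by
  choose K hK𝓕 hKA using h
  let U : Ultrafilter (Finset ι) := Ultrafilter.of atTop
  let T : Set α := {k | ∀ᶠ (F : Finset ι) in U, k ∈ K F}
  refine ⟨T, (h𝓕 T).2 fun y hyT hyfin => ?_, fun m => ?_⟩
  · have hyK : ∀ᶠ (F : Finset ι) in U, y ⊆ K F := (eventually_all_finite hyfin).2 hyT
    obtain ⟨F, hyF⟩ := hyK.exists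
    exact (h𝓕 (K F)).1 (hK𝓕 F) y hyF hyfin
  · have hge : ∀ᶠ (F : Finset ι) in U, {m} ≤ F :=
      (eventually_ge_atTop {m}).filter_mono (Ultrafilter.of_le atTop)
    have hmeet : ∀ᶠ (F : Finset ι) in U, ∃ k ∈ A m, k ∈ K F :=
      hge.mono fun F hF => hKA F m (Finset.singleton_subset_iff.1 hF)
    exact (Ultrafilter.eventually_exists_mem_iff (hA m)).1 hmeet

theorem infinite_of_forall_inter_nonempty [Infinite ι] {A : ι → Set α}
    (hA : ∀ k, {m | k ∈ A m}.Finite) {T : Set α} (hT : ∀ m, (A m ∩ T).Nonempty) :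
    T.Infinite := by
  intro hTfin
  refine Set.infinite_univ ((hTfin.biUnion fun k _ => hA k).subset fun m _ => ?_)
  obtain ⟨k, hkA, hkT⟩ := hT m
  exact Set.mem_biUnion hkT hkA

theorem finite_setOf_mem_of_pairwise_disjoint {A : ι → Finset α}
    (hA : ∀ m m', m ≠ m' → Disjoint (A m) (A m')) (k : α) : {m | k ∈ A m}.Finite :=
  Set.Subsingleton.finite fun m hm m' hm' =>
    by_contra fun hne => Finset.disjoint_left.1 (hA m m' hne) hm hm'

end HittingSets

section Domination

variable (𝕜 : Type*) {ι κ X E : Type*} [Semiring 𝕜] [SeminormedAddCommGroup X] [Module 𝕜 X]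
  [SeminormedAddCommGroup E] [Module 𝕜 E]

/-- The family `x` `C`-dominates the family `y` on the index set `S`: only coefficients supported in
`S` are considered. In the paper's notation, `u` `D`-dominating `e` on `K` reads
`‖I : E|_K → X|_K‖ ≤ D`. -/
def DominatesOn (C : ℝ) (S : Set ι) (x : ι → X) (y : ι → E) : Prop :=
  ∀ a : ι →₀ 𝕜, (∀ i ∈ a.support, i ∈ S) →
    ‖linearCombination 𝕜 y a‖ ≤ C * ‖linearCombination 𝕜 x a‖

/-- The family `x` dominates the family `y`: it `C`-dominates `y`, on all indices, for some
`C > 0`. -/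
def Dominates (x : ι → X) (y : ι → E) : Prop :=
  ∃ C : ℝ, 0 < C ∧ ∀ a : ι →₀ 𝕜, ‖linearCombination 𝕜 y a‖ ≤ C * ‖linearCombination 𝕜 x a‖

/-- A spreading sequence: linear combinations keep their norm on passing to a subsequence. -/
def IsSpreading (u : ℕ → E) : Prop :=
  ∀ ψ : ℕ → ℕ, StrictMono ψ → ∀ a : ℕ →₀ 𝕜,
    ‖linearCombination 𝕜 (u ∘ ψ) a‖ = ‖linearCombination 𝕜 u a‖

theorem isOfFiniteCharacter_setOf_dominatesOn (C : ℝ) (x : ι → X) (y : ι → E) :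
    Order.IsOfFiniteCharacter {S | DominatesOn 𝕜 C S x y} := fun _ =>
  ⟨fun h _ hs _ a ha => h a fun i hi => hs (ha i hi),
    fun h a ha => h a.support ha a.support.finite_toSet a fun _ hi => hi⟩

variable {𝕜}

theorem not_dominates_iff {x : ι → X} {y : ι → E} :
    ¬ Dominates 𝕜 x y ↔ ∀ C : ℝ, 0 < C →
      ∃ a : ι →₀ 𝕜, C * ‖linearCombination 𝕜 x a‖ < ‖linearCombination 𝕜 y a‖ := by
  simp only [Dominates, not_exists, not_and, not_forall, not_le]

theorem DominatesOn.dominates_comp {C : ℝ} {S : Set ι} {x : ι → X} {y : ι → E}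
    (h : DominatesOn 𝕜 C S x y) (hC : 0 < C) (φ : κ ↪ ι) (hφ : ∀ j, φ j ∈ S) :
    Dominates 𝕜 (x ∘ φ) (y ∘ φ) := by
  refine ⟨C, hC, fun a => ?_⟩
  rw [← linearCombination_embDomain, ← linearCombination_embDomain]
  refine h (a.embDomain φ) fun i hi => ?_
  rw [support_embDomain, Finset.mem_map] at hi
  obtain ⟨j, -, rfl⟩ := hi
  exact hφ j

theorem DominatesOn.exists_strictMono_dominates_comp {C : ℝ} {T : Set ℕ} {x : ℕ → X} {y : ℕ → E}
    (h : DominatesOn 𝕜 C T x y) (hC : 0 < C) (hT : T.Infinite) :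
    ∃ φ : ℕ → ℕ, StrictMono φ ∧ Dominates 𝕜 (x ∘ φ) (y ∘ φ) :=
  have hφ : StrictMono (Nat.nth (· ∈ T)) := Nat.nth_strictMono hT
  ⟨Nat.nth (· ∈ T), hφ, h.dominates_comp hC ⟨_, hφ.injective⟩ (Nat.nth_mem_of_infinite hT)⟩

theorem IsSpreading.dominates_comp_iff {u : ℕ → E} (hu : IsSpreading 𝕜 u) {φ : ℕ → ℕ}
    (hφ : StrictMono φ) {y : ℕ → X} : Dominates 𝕜 (u ∘ φ) y ↔ Dominates 𝕜 u y := by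
  simp only [Dominates, hu φ hφ]

theorem selection_not_dominated_of_no_subseq_dominated_general (e : ℕ → X) (u : ℕ → E)
    (hnodom : ∀ φ : ℕ → ℕ, StrictMono φ → ¬ Dominates 𝕜 (u ∘ φ) (e ∘ φ))
    (A : ℕ → Finset ℕ) (hA : ∀ k, {m | k ∈ A m}.Finite) {D : ℝ} (hD : 0 < D) :
    ∃ M : ℕ, ∀ K : Set ℕ, (∀ m < M, ∃ k, k ∈ K ∧ k ∈ A m) →
      ∃ a : ℕ →₀ 𝕜, (∀ k ∈ a.support, k ∈ K ∧ ∃ m < M, k ∈ A m) ∧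
        D * ‖linearCombination 𝕜 u a‖ < ‖linearCombination 𝕜 e a‖ := by
  by_contra! hfail
  have hfinite (F : Finset ℕ) :
      ∃ S ∈ {S | DominatesOn 𝕜 D S u e}, ∀ m ∈ F, (↑(A m) ∩ S).Nonempty := by
    obtain ⟨M, hFM⟩ := F.exists_nat_subset_range
    obtain ⟨K, hK, hdom⟩ := hfail M
    refine ⟨{k | k ∈ K ∧ ∃ m < M, k ∈ A m}, hdom, fun m hm => ?_⟩
    have hmM : m < M := Finset.mem_range.1 (hFM hm)
    obtain ⟨k, hkK, hkA⟩ := hK m hmM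
    exact ⟨k, hkA, hkK, m, hmM, hkA⟩
  obtain ⟨T, hTdom, hTA⟩ := exists_mem_forall_inter_nonempty_of_isOfFiniteCharacter
    (isOfFiniteCharacter_setOf_dominatesOn 𝕜 D u e) (fun m => (A m).finite_toSet) hfinite
  have hTinf : T.Infinite := infinite_of_forall_inter_nonempty hA hTA
  obtain ⟨φ, hφ, hdom⟩ := hTdom.exists_strictMono_dominates_comp hD hTinf
  exact hnodom φ hφ hdom

end Domination

/-- The 'respectively' version of the compactness observation at the start of
the proof of Proposition I: if `u` is spreading and no subsequence of `e` is
dominated by `u`, then for any partition of `ℕ` into disjoint nonempty finite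
sets `A m` and any `D > 0` there is `M` such that for every selection set `K`
meeting each `A m` (`m < M`) in exactly one point, some finitely supported `a`
supported in `K ∩ (A 0 ∪ … ∪ A (M-1))` witnesses
`‖∑ a_k e_k‖ > D ‖∑ a_k u_k‖`. -/
theorem selection_not_dominated_of_no_subseq_dominated
    {X E : Type*} [NormedAddCommGroup X] [NormedSpace ℝ X]
    [NormedAddCommGroup E] [NormedSpace ℝ E]
    (e : ℕ → X) (u : ℕ → E)
    (hspread : ∀ ψ : ℕ → ℕ, StrictMono ψ → ∀ a : ℕ →₀ ℝ,
      ‖∑ i ∈ a.support, a i • u (ψ i)‖ = ‖∑ i ∈ a.support, a i • u i‖)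
    (hnodom : ∀ φ : ℕ → ℕ, StrictMono φ → ∀ C : ℝ, 0 < C →
      ∃ a : ℕ →₀ ℝ,
        ‖∑ i ∈ a.support, a i • e (φ i)‖ > C * ‖∑ i ∈ a.support, a i • u i‖)
    (A : ℕ → Finset ℕ)
    (hA_nonempty : ∀ m, (A m).Nonempty)
    (hA_disjoint : ∀ m m', m ≠ m' → Disjoint (A m) (A m'))
    (hA_cover : ∀ n : ℕ, ∃ m, n ∈ A m) :
    ∀ D : ℝ, 0 < D → ∃ M : ℕ,
      ∀ K : Set ℕ, (∀ m < M, ∃! k, k ∈ K ∧ k ∈ A m) →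
        ∃ a : ℕ →₀ ℝ,
          (∀ k ∈ a.support, k ∈ K ∧ ∃ m < M, k ∈ A m) ∧
          ‖∑ k ∈ a.support, a k • e k‖ > D * ‖∑ k ∈ a.support, a k • u k‖ := by
  intro D hD
  have hnodom_comp (φ : ℕ → ℕ) (hφ : StrictMono φ) : ¬ Dominates ℝ (u ∘ φ) (e ∘ φ) :=
    (IsSpreading.dominates_comp_iff hspread hφ).not.2 (not_dominates_iff.2 (hnodom φ hφ))
  obtain ⟨M, hM⟩ := selection_not_dominated_of_no_subseq_dominated_general e u hnodom_comp A
    (finite_setOf_mem_of_pairwise_disjoint hA_disjoint) hD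
  exact ⟨M, fun K hK => hM K fun m hm => (hK m hm).exists⟩
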